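/- Let n ≥ 2, 1 ≤ s ≤ n, a₁,…,a_{s−1} nonzero reals, b ∈ ℝ, and let L ⊆ ℝⁿ be the hyperplane parameterized by (x₁,…,x_{n−1}) ↦ (x₁,…,x_{n−1}, a₁x₁+⋯+a_{s−1}x_{s−1}+b). For v > n let c_s = (v−n)/(sv+n), and say that condition P(v) holds if: for every d > c_s there exists T > 0 such that for all t = (t₁,…,t_n), tᵢ ≥ 0, with ∑ᵢtᵢ ≥ T and every w = (p₀,p₁,…,p_n) ∈ ℤ^{n+1}_s one has max( max_{1≤i≤n} e^{−tᵢ}|pᵢ|, e^{∑ᵢtᵢ}·max(|p₀+b·p_n|, max_{1≤i≤s−1}|pᵢ+aᵢ·p_n|, max_{s≤i≤n−1}|pᵢ|) ) ≥ e^{−d·∑ᵢtᵢ}. Then ω×(L) = max{ n, sup{v > n : P(v) does not hold} } (with sup ∅ = n in the extended reals). -/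

import Mathlib

open Filter MeasureTheory Metric Set BigOperators

/-- Π×(q) = ∏_{i : qᵢ ≠ 0} |qᵢ| (empty product = 1). -/
noncomputable def prodTimes {n : ℕ} (q : Fin n → ℤ) : ℝ :=
  ∏ i, if q i = 0 then 1 else |(q i : ℝ)|

/-- Multiplicative Diophantine exponent ω×(y): the sup (in the extended reals) of all
v ∈ ℝ such that there are infinitely many q ∈ ℤⁿ with |q·y + p| < Π×(q)^{-v/n}
for some p ∈ ℤ. -/
noncomputable def omegaT {n : ℕ} (y : Fin n → ℝ) : EReal :=
  sSup {w : EReal | ∃ v : ℝ, w = (v : EReal) ∧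
    {q : Fin n → ℤ | ∃ p : ℤ, |(∑ i, (q i : ℝ) * y i) + (p : ℝ)| <
      (prodTimes q) ^ (-(v / (n : ℝ)))}.Infinite}

/-- ω×(μ) for a measure: sup{v : μ{y : ω×(y) > v} > 0}. -/
noncomputable def omegaTMeas {n : ℕ} (μ : Measure (Fin n → ℝ)) : EReal :=
  sSup {w : EReal | ∃ v : ℝ, w = (v : EReal) ∧ 0 < μ {y | (v : EReal) < omegaT y}}

/-- ‖R C(w)‖ for the hyperplane data (a, b): here w = (p₀, p) with p = (p₁, …, p_n),
n = m + 1, s = r + 1, and p_n = p (Fin.last m); this is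
max(|p₀ + b·p_n|, max_{1≤i≤s-1} |pᵢ + aᵢ·p_n|, max_{s≤i≤n-1} |pᵢ|). -/
noncomputable def RCnorm (m r : ℕ) (hrm : r ≤ m) (a : Fin r → ℝ) (b : ℝ)
    (p0 : ℤ) (p : Fin (m + 1) → ℤ) : ℝ :=
  max (|(p0 : ℝ) + b * (p (Fin.last m) : ℝ)|)
    (max
      (Finset.univ.fold max 0 (fun j : Fin r =>
        |(p (Fin.castLE (le_trans hrm (Nat.le_succ m)) j) : ℝ) + a j * (p (Fin.last m) : ℝ)|))
      ((Finset.univ.filter (fun j : Fin (m + 1) => r ≤ (j : ℕ) ∧ (j : ℕ) < m)).fold max 0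
        (fun j => |(p j : ℝ)|)))

/-- Condition (2.6.2) / P(v) for the hyperplane data (a, b), with n = m + 1, s = r + 1:
for every d > c_s there is T > 0 such that for every t with tᵢ ≥ 0 and ∑ tᵢ ≥ T and
every w = (p₀, p) ∈ ℤ^{n+1}_s one has
max(maxᵢ e^{-tᵢ}|pᵢ|, e^{∑ t}·‖R C(w)‖) ≥ e^{-d ∑ t}. -/
def PCond (m r : ℕ) (hrm : r ≤ m) (a : Fin r → ℝ) (b : ℝ) (v : ℝ) : Prop :=
  ∀ d : ℝ, (v - (m + 1 : ℝ)) / ((r + 1 : ℝ) * v + (m + 1 : ℝ)) < d →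
    ∃ T > (0:ℝ), ∀ t : Fin (m + 1) → ℝ, (∀ i, 0 ≤ t i) → T ≤ ∑ i, t i →
      ∀ (p0 : ℤ) (p : Fin (m + 1) → ℤ),
        (Finset.univ.filter fun i => p i ≠ 0).card = r + 1 →
        Real.exp (-d * ∑ i, t i) ≤
          max (Finset.univ.fold max 0 (fun i => Real.exp (-(t i)) * |(p i : ℝ)|))
            (Real.exp (∑ i, t i) * RCnorm m r hrm a b p0 p)

/-!
Restricted to the hyperplane, the form `q · y + p₀` becomes the affine form in `x` with
coefficient vector `R C(w)`, `w = (p₀, q)`, so `|q · y + p₀|` is at most a constant times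
`‖R C(w)‖`. If `P(v)` fails, then at suitable times of the diagonal flow some `w` has `R C(w)` short
compared with `Π×(q)`, and `ω×(y) ≥ v` at every point `y` of the hyperplane; `ω×(y) ≥ n` is
Dirichlet's theorem.

If `P(v)` holds and `u > v`, then almost every point lies in only finitely many of the slabs
`|q · y + p₀| < Π×(q) ^ (-u / n)` by Borel–Cantelli. The `w` with `‖R C(w)‖` bounded below
contribute a sum bounded by `∑ Π×(q) ^ (-u / n)`. A short `R C(w)` forces `q` to have exactly `s`
nonzero entries, all comparable with the last one, and `P(v)` bounds `‖R C(w)‖` from below by a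
power of that entry. Applied to differences of two such vectors, the same bound keeps their last
entries apart, so few `w` have `‖R C(w)‖` of a given dyadic size and the sum of
the volumes converges.
-/

/-! ### The multiplicative exponent -/

section

open scoped Finset

variable {n : ℕ}

theorem prodTimes_eq_prod_max (q : Fin n → ℤ) : prodTimes q = ∏ i, max 1 |(q i : ℝ)| := by
  refine Finset.prod_congr rfl fun i _ => ?_
  split_ifs with h
  · simp [h]
  · exact (max_eq_right (mod_cast Int.one_le_abs h)).symm

theorem prodTimes_eq_prod_filter (q : Fin n → ℤ) :
    prodTimes q = ∏ i with q i ≠ 0, |(q i : ℝ)| := by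
  simp only [prodTimes, Finset.prod_filter, ite_not]

theorem one_le_prodTimes (q : Fin n → ℤ) : 1 ≤ prodTimes q := by
  rw [prodTimes_eq_prod_max]
  exact Finset.one_le_prod fun _ _ => le_max_left _ _

theorem prodTimes_pos (q : Fin n → ℤ) : 0 < prodTimes q :=
  one_pos.trans_le (one_le_prodTimes q)

theorem prodTimes_single (i : Fin n) (k : ℤ) :
    prodTimes (Pi.single (M := fun _ => ℤ) i k) = max 1 |(k : ℝ)| := by
  rw [prodTimes_eq_prod_max, Finset.prod_eq_single i] <;> simp +contextual

theorem prodTimes_cons (k : ℤ) (q : Fin n → ℤ) :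
    prodTimes (Fin.cons k q : Fin (n + 1) → ℤ) = max 1 |(k : ℝ)| * prodTimes q := by
  simp only [prodTimes_eq_prod_max, Fin.prod_univ_succ, Fin.cons_zero, Fin.cons_succ]

theorem pow_card_le_prodTimes {q : Fin n → ℤ} {c : ℝ} (hc : 0 ≤ c)
    (h : ∀ i, q i ≠ 0 → c ≤ |(q i : ℝ)|) : c ^ #{i | q i ≠ 0} ≤ prodTimes q := by
  rw [prodTimes_eq_prod_filter, ← Finset.prod_const]
  exact Finset.prod_le_prod (fun _ _ => hc) fun i hi => h i (Finset.mem_filter.1 hi).2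

theorem prodTimes_le_exp {q : Fin n → ℤ} {t : Fin n → ℝ} {c : ℝ} (ht : ∀ i, 0 ≤ t i)
    (h : ∀ i, |(q i : ℝ)| ≤ Real.exp (t i - c)) :
    prodTimes q ≤ Real.exp (∑ i, t i - #{i | q i ≠ 0} * c) := by
  calc prodTimes q = ∏ i with q i ≠ 0, |(q i : ℝ)| := prodTimes_eq_prod_filter q
    _ ≤ ∏ i with q i ≠ 0, Real.exp (t i - c) :=
      Finset.prod_le_prod (fun _ _ => abs_nonneg _) fun i _ => h i
    _ = Real.exp (∑ i with q i ≠ 0, t i - #{i | q i ≠ 0} * c) := by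
      rw [← Real.exp_sum, Finset.sum_sub_distrib, Finset.sum_const, nsmul_eq_mul]
    _ ≤ Real.exp (∑ i, t i - #{i | q i ≠ 0} * c) := by
      gcongr 2
      exact Finset.sum_le_univ_sum_of_nonneg ht

theorem summable_max_one_abs_int_rpow {γ : ℝ} (hγ : 1 < γ) :
    Summable fun k : ℤ => max 1 |(k : ℝ)| ^ (-γ) := by
  refine (Real.summable_abs_int_rpow hγ).congr_cofinite ?_
  filter_upwards [(Set.finite_singleton (0 : ℤ)).compl_mem_cofinite] with k hk
  rw [max_eq_right (mod_cast Int.one_le_abs hk)]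

theorem summable_prodTimes_rpow (n : ℕ) {γ : ℝ} (hγ : 1 < γ) :
    Summable fun q : Fin n → ℤ => prodTimes q ^ (-γ) := by
  induction n with
  | zero => exact Summable.of_finite
  | succ n ih =>
    rw [← (Fin.consEquiv fun _ => ℤ).summable_iff]
    refine ((summable_max_one_abs_int_rpow hγ).mul_of_nonneg ih (fun k => by positivity)
      fun q => Real.rpow_nonneg (prodTimes_pos q).le _).congr fun z => ?_
    rw [← Real.mul_rpow (by positivity) (prodTimes_pos _).le, ← prodTimes_cons]
    rfl

/-- The value `q · y + p` at `y` of the affine form with the integer coefficients `w = (q, p)`. -/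
def intForm (w : (Fin n → ℤ) × ℤ) (y : Fin n → ℝ) : ℝ :=
  ∑ i, (w.1 i : ℝ) * y i + w.2

/-- The vectors `q` that the definition of ω×(y) counts, for the exponent `γ = v / n`. -/
def goodApprox (y : Fin n → ℝ) (γ : ℝ) : Set (Fin n → ℤ) :=
  {q | ∃ p : ℤ, |intForm (q, p) y| < prodTimes q ^ (-γ)}

theorem intForm_zsmul (k : ℤ) (w : (Fin n → ℤ) × ℤ) (y : Fin n → ℝ) :
    intForm (k • w) y = k * intForm w y := by
  simp [intForm, mul_add, Finset.mul_sum, mul_assoc]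

theorem goodApprox_infinite_of_intForm_eq_zero {w : (Fin n → ℤ) × ℤ} {y : Fin n → ℝ}
    (hw : w.1 ≠ 0) (h : intForm w y = 0) (γ : ℝ) : (goodApprox y γ).Infinite := by
  refine Set.infinite_of_injective_forall_mem (smul_left_injective ℤ hw) fun k => ⟨k • w.2, ?_⟩
  have hk : intForm (k • w) y = 0 := by rw [intForm_zsmul, h, mul_zero]
  exact (abs_eq_zero.2 hk).trans_lt (Real.rpow_pos_of_pos (prodTimes_pos _) _)

theorem goodApprox_infinite {y : Fin n → ℝ} {γ : ℝ}
    (h : ∀ δ > 0, ∃ w : (Fin n → ℤ) × ℤ, w.1 ≠ 0 ∧ |intForm w y| < δ ∧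
      |intForm w y| < prodTimes w.1 ^ (-γ)) : (goodApprox y γ).Infinite := by
  by_cases h0 : ∃ w : (Fin n → ℤ) × ℤ, w.1 ≠ 0 ∧ intForm w y = 0
  · obtain ⟨w, hw, hwy⟩ := h0
    exact goodApprox_infinite_of_intForm_eq_zero hw hwy γ
  · push Not at h0
    intro hfin
    let dist (q : Fin n → ℤ) : ℝ := |intForm (q, -round (∑ i, (q i : ℝ) * y i)) y|
    have hV : (dist '' (goodApprox y γ \ {0}))ᶜ ∈ nhds 0 := by
      refine (hfin.sdiff.image dist).isClosed.isOpen_compl.mem_nhds ?_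
      rintro ⟨q, hq, hq0⟩
      exact h0 (q, _) hq.2 (abs_eq_zero.1 hq0)
    obtain ⟨δ, hδ, hball⟩ := Metric.mem_nhds_iff.1 hV
    obtain ⟨⟨q, p⟩, hq, hlt, hgood⟩ := h δ hδ
    have hle : dist q ≤ |intForm (q, p) y| := by
      simpa [dist, intForm, ← sub_eq_add_neg] using round_le (∑ i, (q i : ℝ) * y i) (-p)
    have hmem : dist q ∈ Metric.ball 0 δ := by simpa [dist] using hle.trans_lt hlt
    exact hball hmem ⟨q, ⟨⟨p, hgood⟩, hq⟩, rfl⟩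

theorem le_omegaT_of_infinite {y : Fin n → ℝ} {v : ℝ} (h : (goodApprox y (v / n)).Infinite) :
    (v : EReal) ≤ omegaT y :=
  le_sSup ⟨v, rfl, h⟩

theorem omegaT_le_of_finite {y : Fin n → ℝ} {u : ℝ} (h : (goodApprox y (u / n)).Finite) :
    omegaT y ≤ u := by
  refine sSup_le ?_
  rintro _ ⟨v, rfl, hinf⟩
  refine EReal.coe_le_coe_iff.2 (le_of_not_gt fun huv => hinf (h.subset ?_))
  rintro q ⟨p, hp⟩
  refine ⟨p, hp.trans_le (Real.rpow_le_rpow_of_exponent_le (one_le_prodTimes q) ?_)⟩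
  gcongr

theorem natCast_le_omegaT [NeZero n] (y : Fin n → ℝ) : (n : EReal) ≤ omegaT y := by
  refine le_omegaT_of_infinite (v := n) (goodApprox_infinite fun δ hδ => ?_)
  obtain ⟨N, hN⟩ := exists_nat_one_div_lt hδ
  obtain ⟨j, k, hk, hkN, hjk⟩ := Real.exists_int_int_abs_mul_sub_le (y 0) N.succ_pos
  have hk1 : (1 : ℝ) ≤ k := mod_cast hk
  have hkN' : (k : ℝ) ≤ N + 1 := mod_cast hkN
  have hform : intForm (Pi.single 0 k, -j) y = k * y 0 - j := by
    simp [intForm, Pi.single_apply, sub_eq_add_neg]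
  have hprod : prodTimes (Pi.single (M := fun _ => ℤ) (0 : Fin n) k) = k := by
    rw [prodTimes_single, abs_of_pos (by positivity), max_eq_right hk1]
  have hlt : |intForm (Pi.single 0 k, -j) y| < 1 / (N + 1) := by
    rw [hform]
    refine hjk.trans_lt (one_div_lt_one_div_of_lt (by positivity) ?_)
    push_cast
    linarith
  refine ⟨(Pi.single 0 k, -j), by simpa using hk.ne', hlt.trans hN, hlt.trans_le ?_⟩
  rw [hprod, div_self (NeZero.ne _), Real.rpow_neg_one, ← one_div]
  exact one_div_le_one_div_of_le (by positivity) hkN'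

theorem omegaTMeas_le {μ : Measure (Fin n → ℝ)} {c : EReal}
    (h : ∀ u : ℝ, c < u → ∀ᵐ y ∂μ, omegaT y ≤ u) : omegaTMeas μ ≤ c := by
  refine sSup_le ?_
  rintro _ ⟨u, rfl, hu⟩
  by_contra! hcu
  exact hu.ne' (by simpa [ae_iff] using h u hcu)

theorem le_omegaTMeas {μ : Measure (Fin n → ℝ)} [NeZero μ] {c : EReal}
    (h : ∀ᵐ y ∂μ, c ≤ omegaT y) : c ≤ omegaTMeas μ := by
  refine EReal.ge_of_forall_gt_iff_ge.1 fun z hz => le_sSup ⟨z, rfl, ?_⟩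
  refine pos_iff_ne_zero.2 fun h0 => NeZero.ne μ (ae_eq_bot.1 ?_)
  rw [← Filter.eventually_false_iff_eq_bot]
  filter_upwards [h, measure_eq_zero_iff_ae_notMem.1 h0] with y hy hy'
  exact hy' (hz.trans_le hy)

end

/-! ### Volumes of slabs -/

section

variable {ι : Type*} [Fintype ι]

theorem abs_dotProduct_le (u x : ι → ℝ) : |u ⬝ᵥ x| ≤ Fintype.card ι * ‖u‖ * ‖x‖ := by
  calc |u ⬝ᵥ x| ≤ ∑ j, |u j * x j| := Finset.abs_sum_le_sum_abs _ _
    _ ≤ ∑ _j : ι, ‖u‖ * ‖x‖ := by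
      gcongr with j
      rw [abs_mul]
      gcongr
      exacts [norm_le_pi_norm u j, norm_le_pi_norm x j]
    _ = Fintype.card ι * ‖u‖ * ‖x‖ := by simp [mul_assoc]

/-- The part of the box of radius `R` where the affine form `x ↦ c.1 + c.2 · x` is smaller than
`ε`; the norm of the coefficient vector `c` is its maximum norm. -/
def slab (c : ℝ × (ι → ℝ)) (R ε : ℝ) : Set (ι → ℝ) :=
  {x | ‖x‖ ≤ R ∧ |c.1 + c.2 ⬝ᵥ x| < ε}

theorem abs_fst_lt_of_mem_slab {c : ℝ × (ι → ℝ)} {R ε : ℝ} {x : ι → ℝ} (hx : x ∈ slab c R ε) :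
    |c.1| < ε + Fintype.card ι * ‖c.2‖ * R := by
  have hdot : |c.2 ⬝ᵥ x| ≤ Fintype.card ι * ‖c.2‖ * R :=
    (abs_dotProduct_le c.2 x).trans (mul_le_mul_of_nonneg_left hx.1 (by positivity))
  have htri : |c.1| ≤ |c.1 + c.2 ⬝ᵥ x| + |c.2 ⬝ᵥ x| := by
    simpa using abs_sub (c.1 + c.2 ⬝ᵥ x) (c.2 ⬝ᵥ x)
  linarith [hx.2]

theorem volume_norm_le {R : ℝ} (hR : 0 ≤ R) :
    volume {x : ι → ℝ | ‖x‖ ≤ R} = ENNReal.ofReal ((2 * R) ^ Fintype.card ι) := by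
  have hball : {x : ι → ℝ | ‖x‖ ≤ R} = Metric.closedBall 0 R := by ext; simp
  rw [hball, Real.volume_pi_closedBall _ hR]

theorem volume_abs_add_mul_lt {c : ℝ} (hc : c ≠ 0) (e ε : ℝ) :
    volume {t : ℝ | |e + c * t| < ε} = ENNReal.ofReal (2 * ε / |c|) := by
  have hball : {t : ℝ | |e + c * t| < ε} = Metric.ball (-e / c) (ε / |c|) := by
    ext t
    have h : e + c * t = (t - -e / c) * c := by field_simp; ring
    rw [Metric.mem_ball, Real.dist_eq, lt_div_iff₀ (abs_pos.2 hc), ← abs_mul, ← h, mem_ofPred_eq]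
  rw [hball, Real.volume_ball, mul_div_assoc]

theorem prod_measure_le_of_section_le {X Y : Type*} [MeasurableSpace X] [MeasurableSpace Y]
    {μ : Measure X} {ν : Measure Y} [SFinite μ] [SFinite ν] {S : Set (X × Y)} {T : Set Y}
    {M : ENNReal} (hS : MeasurableSet S) (hT : MeasurableSet T) (hST : ∀ z ∈ S, z.2 ∈ T)
    (hM : ∀ y ∈ T, μ {x | (x, y) ∈ S} ≤ M) : μ.prod ν S ≤ M * ν T := by
  rw [Measure.prod_apply_symm hS, ← setLIntegral_const, ← lintegral_indicator hT]
  refine lintegral_mono fun y => ?_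
  by_cases hy : y ∈ T
  · rw [indicator_of_mem hy]
    exact hM y hy
  · rw [indicator_of_notMem hy, nonpos_iff_eq_zero]
    exact measure_mono_null (fun x hx => hy (hST (x, y) hx)) measure_empty

theorem volume_slab_le_of_apply_ne_zero {k : ℕ} {c : ℝ × (Fin (k + 1) → ℝ)} {R : ℝ} (hR : 0 ≤ R)
    (ε : ℝ) {i : Fin (k + 1)} (hi : c.2 i ≠ 0) :
    volume (slab c R ε) ≤ ENNReal.ofReal (2 * ε / |c.2 i|) * ENNReal.ofReal ((2 * R) ^ k) := by
  let e (y : Fin k → ℝ) : ℝ := c.1 + ∑ j, c.2 (i.succAbove j) * y j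
  let T : Set (Fin k → ℝ) := {y | ‖y‖ ≤ R}
  let S : Set (ℝ × (Fin k → ℝ)) := {z | z.2 ∈ T ∧ |e z.2 + c.2 i * z.1| < ε}
  have hT : MeasurableSet T := measurableSet_le measurable_norm measurable_const
  have hslope : Measurable fun z : ℝ × (Fin k → ℝ) => |e z.2 + c.2 i * z.1| := by
    fun_prop
  have hS : MeasurableSet S :=
    (measurable_snd hT).inter (measurableSet_lt hslope measurable_const)
  have hsub : slab c R ε ⊆ MeasurableEquiv.piFinSuccAbove (fun _ => ℝ) i ⁻¹' S := by
    rintro x ⟨hx, hlt⟩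
    refine ⟨(pi_norm_le_iff_of_nonneg hR).2 fun j => (norm_le_pi_norm x _).trans hx, ?_⟩
    rw [dotProduct, Fin.sum_univ_succAbove _ i, add_comm (c.2 i * x i), ← add_assoc] at hlt
    exact hlt
  calc volume (slab c R ε) ≤ (volume.prod volume) S :=
        (measure_mono hsub).trans_eq ((volume_preserving_piFinSuccAbove _ i).measure_preimage
          hS.nullMeasurableSet)
    _ ≤ ENNReal.ofReal (2 * ε / |c.2 i|) * volume T := by
      refine prod_measure_le_of_section_le hS hT (fun _ hz => hz.1) fun y _ => ?_
      rw [← volume_abs_add_mul_lt hi (e y)]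
      exact measure_mono fun _ ht => ht.2
    _ = _ := by rw [volume_norm_le hR, Fintype.card_fin]

theorem volume_slab_le_of_norm_snd_pos {m : ℕ} {c : ℝ × (Fin m → ℝ)} (hc : 0 < ‖c.2‖) {R ε : ℝ}
    (hR : 1 ≤ R) (hε : 0 ≤ ε) :
    volume (slab c R ε) ≤ ENNReal.ofReal (2 * (2 * R) ^ m * (ε / ‖c.2‖)) := by
  obtain _ | k := m
  · simp [Subsingleton.elim c.2 0] at hc
  obtain ⟨i, hi⟩ : ∃ i, |c.2 i| = ‖c.2‖ := by
    obtain ⟨i, hmax⟩ := Finite.exists_max fun i => ‖c.2 i‖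
    exact ⟨i, le_antisymm (norm_le_pi_norm c.2 i)
      ((pi_norm_le_iff_of_nonneg (norm_nonneg _)).2 hmax)⟩
  refine (volume_slab_le_of_apply_ne_zero (by linarith) ε (abs_pos.1 (hi ▸ hc))).trans ?_
  rw [hi, ← ENNReal.ofReal_mul (by positivity)]
  refine ENNReal.ofReal_le_ofReal ?_
  calc 2 * ε / ‖c.2‖ * (2 * R) ^ k = 2 * (2 * R) ^ k * (ε / ‖c.2‖) := by ring
    _ ≤ 2 * (2 * R) ^ (k + 1) * (ε / ‖c.2‖) := by
      gcongr
      exacts [by linarith, k.le_succ]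

theorem volume_slab_le_of_mul_norm_snd_le {m : ℕ} {c : ℝ × (Fin m → ℝ)} (hc : c ≠ 0) {R : ℝ}
    (hR : 0 ≤ R) (h : 2 * (m * R + 1) * ‖c.2‖ ≤ |c.1|) (ε : ℝ) :
    volume (slab c R ε) ≤ ENNReal.ofReal ((2 * R) ^ m * (2 * ε / ‖c‖)) := by
  rcases (slab c R ε).eq_empty_or_nonempty with hempty | ⟨x, hx⟩
  · simp [hempty]
  have hnorm : ‖c‖ = |c.1| := by
    refine max_eq_left (le_trans ?_ h)
    nlinarith [norm_nonneg c.2, mul_nonneg (mul_nonneg m.cast_nonneg hR) (norm_nonneg c.2)]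
  have hlt := abs_fst_lt_of_mem_slab hx
  rw [Fintype.card_fin] at hlt
  have hone : 1 ≤ 2 * ε / ‖c‖ := by
    rw [one_le_div (norm_pos_iff.2 hc), hnorm]
    linarith [norm_nonneg c.2]
  refine (measure_mono (t := {x | ‖x‖ ≤ R}) fun _ hx => hx.1).trans ?_
  rw [volume_norm_le hR, Fintype.card_fin]
  exact ENNReal.ofReal_le_ofReal (le_mul_of_one_le_right (by positivity) hone)

/-- The constant `K` separates two regimes: if the constant coefficient exceeds `K` times the
others, then the form is bounded below on the box by half its norm; otherwise the others are
comparable to the norm. -/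
theorem exists_volume_slab_le (m : ℕ) {R : ℝ} (hR : 1 ≤ R) : ∃ C > 0, ∀ (c : ℝ × (Fin m → ℝ))
    (ε : ℝ), c ≠ 0 → 0 ≤ ε → volume (slab c R ε) ≤ ENNReal.ofReal (C * (ε / ‖c‖)) := by
  set K : ℝ := 2 * (m * R + 1)
  have hK : 1 ≤ K := by
    have hmR : 0 ≤ m * R := by positivity
    linarith
  refine ⟨2 * (2 * R) ^ m * K, by positivity, fun c ε hc hε => ?_⟩
  have hc0 : 0 < ‖c‖ := norm_pos_iff.2 hc
  rcases le_or_gt (K * ‖c.2‖) |c.1| with hlarge | hsmall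
  · refine (volume_slab_le_of_mul_norm_snd_le hc (by linarith) hlarge ε).trans
      (ENNReal.ofReal_le_ofReal ?_)
    calc (2 * R) ^ m * (2 * ε / ‖c‖) = 2 * (2 * R) ^ m * 1 * (ε / ‖c‖) := by ring
      _ ≤ 2 * (2 * R) ^ m * K * (ε / ‖c‖) := by gcongr
  · have hc2 : 0 < ‖c.2‖ := by
      by_contra h
      nlinarith [abs_nonneg c.1, norm_nonneg c.2]
    have hnorm : ‖c‖ ≤ K * ‖c.2‖ := max_le hsmall.le (by nlinarith)
    refine (volume_slab_le_of_norm_snd_pos hc2 hR hε).trans (ENNReal.ofReal_le_ofReal ?_)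
    have hdiv : ε / ‖c.2‖ ≤ K * (ε / ‖c‖) := by
      rw [← mul_div_assoc, div_le_div_iff₀ hc2 hc0]
      nlinarith
    calc 2 * (2 * R) ^ m * (ε / ‖c.2‖) ≤ 2 * (2 * R) ^ m * (K * (ε / ‖c‖)) := by gcongr
      _ = _ := by ring

theorem ae_finite_mem_slab {m : ℕ} {J : Type*} [Countable J] {R : ℝ} (hR : 1 ≤ R)
    {c : J → ℝ × (Fin m → ℝ)} {ε : J → ℝ} (hc : ∀ j, c j ≠ 0) (hε : ∀ j, 0 ≤ ε j)
    (h : Summable fun j => ε j / ‖c j‖) :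
    ∀ᵐ x, {j | x ∈ slab (c j) R (ε j)}.Finite := by
  obtain ⟨C, -, hC⟩ := exists_volume_slab_le m hR
  exact ae_finite_setOfPred_mem (ne_top_of_le_ne_top (h.mul_left C).tsum_ofReal_ne_top
    (ENNReal.tsum_le_tsum fun j => hC (c j) (ε j) (hc j) (hε j)))

theorem card_Icc_ceil_floor_le {x y : ℝ} (hxy : x ≤ y) :
    ((Finset.Icc ⌈x⌉ ⌊y⌋).card : ℝ) ≤ y - x + 1 := by
  have hcard : ((Finset.Icc ⌈x⌉ ⌊y⌋).card : ℝ) = max ((⌊y⌋ : ℝ) + 1 - ⌈x⌉) 0 := by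
    exact_mod_cast (Int.card_Icc ⌈x⌉ ⌊y⌋).symm ▸ Int.toNat_eq_max _
  rw [hcard]
  exact max_le (by linarith [Int.floor_le y, Int.le_ceil x]) (by linarith)

theorem tsum_int_le_of_abs_add_le {f : ℤ → ENNReal} {z K : ℝ} {M : ENNReal} (hK : 0 ≤ K)
    (hsupp : ∀ p, f p ≠ 0 → |p + z| ≤ K) (hle : ∀ p, f p ≤ M) :
    ∑' p, f p ≤ ENNReal.ofReal (2 * K + 1) * M := by
  let F : Finset ℤ := Finset.Icc ⌈-z - K⌉ ⌊-z + K⌋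
  have houtside : ∀ p ∉ F, f p = 0 := by
    refine fun p hp => of_not_not fun h0 => hp ?_
    obtain ⟨hl, hr⟩ := abs_le.1 (hsupp p h0)
    exact Finset.mem_Icc.2 ⟨Int.ceil_le.2 (by linarith), Int.le_floor.2 (by linarith)⟩
  have hcard : (F.card : ℝ) ≤ 2 * K + 1 :=
    (card_Icc_ceil_floor_le (by linarith)).trans_eq (by ring)
  calc ∑' p, f p = ∑ p ∈ F, f p := tsum_eq_sum houtside
    _ ≤ F.card * M := by simpa using Finset.sum_le_card_nsmul F f M fun p _ => hle p
    _ ≤ ENNReal.ofReal (2 * K + 1) * M := by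
      rw [← ENNReal.ofReal_natCast]
      gcongr

/-- The translates by `p` whose slab is nonempty are `O(1 + ‖u‖)` in number, and each slab has
volume `O(ε / max κ ‖u‖)`. -/
theorem exists_tsum_volume_slab_le (m : ℕ) {R κ : ℝ} (hR : 1 ≤ R) (hκ : 0 < κ) :
    ∃ C > 0, ∀ (z : ℝ) (u : Fin m → ℝ) (ε : ℝ), 0 ≤ ε → ε ≤ 1 →
      ∑' p : ℤ, volume {x | κ ≤ ‖(p + z, u)‖ ∧ x ∈ slab (p + z, u) R ε} ≤
        ENNReal.ofReal (C * ε) := by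
  obtain ⟨C, hC, hvol⟩ := exists_volume_slab_le m hR
  refine ⟨C * (3 / κ + 2 * (m * R)), by positivity, fun z u ε hε hε1 => ?_⟩
  set M := max κ ‖u‖
  have hM : 0 < M := lt_max_of_lt_left hκ
  have hsupp : ∀ p : ℤ, volume {x | κ ≤ ‖(p + z, u)‖ ∧ x ∈ slab (p + z, u) R ε} ≠ 0 →
      |p + z| ≤ 1 + m * ‖u‖ * R := by
    intro p hp
    obtain ⟨x, -, hx⟩ := nonempty_of_measure_ne_zero hp
    have hlt := abs_fst_lt_of_mem_slab hx
    rw [Fintype.card_fin] at hlt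
    linarith
  have heach : ∀ p : ℤ, volume {x | κ ≤ ‖(p + z, u)‖ ∧ x ∈ slab (p + z, u) R ε} ≤
      ENNReal.ofReal (C * (ε / M)) := by
    intro p
    rcases lt_or_ge ‖(p + z, u)‖ κ with hlt | hge
    · exact (measure_mono_null (fun x hx => hlt.not_ge hx.1) measure_empty).trans_le zero_le
    · have hle : M ≤ ‖(p + z, u)‖ := max_le hge (norm_snd_le ((p + z, u) : ℝ × (Fin m → ℝ)))
      refine (measure_mono fun x hx => hx.2).trans
        ((hvol _ ε (norm_pos_iff.1 (hM.trans_le hle)) hε).trans ?_)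
      gcongr
  have hcount : 2 * (1 + m * ‖u‖ * R) + 1 ≤ (3 / κ + 2 * (m * R)) * M := by
    calc 2 * (1 + m * ‖u‖ * R) + 1 = 3 / κ * κ + 2 * (m * R) * ‖u‖ := by
          field_simp
          ring
      _ ≤ 3 / κ * M + 2 * (m * R) * M := by
        gcongr
        exacts [le_max_left _ _, le_max_right _ _]
      _ = (3 / κ + 2 * (m * R)) * M := by ring
  refine (tsum_int_le_of_abs_add_le (by positivity) hsupp heach).trans ?_
  rw [← ENNReal.ofReal_mul (by positivity)]
  refine ENNReal.ofReal_le_ofReal ?_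
  calc (2 * (1 + m * ‖u‖ * R) + 1) * (C * (ε / M))
      ≤ (3 / κ + 2 * (m * R)) * M * (C * (ε / M)) := by gcongr
    _ = C * (3 / κ + 2 * (m * R)) * ε := by field_simp

end

/-! ### The flow condition on a hyperplane -/

section

open scoped Finset

variable {m : ℕ} (α : Fin m → ℝ) (b : ℝ)

/-- The graph parametrization `x ↦ (x, α · x + b)` of a hyperplane of `ℝⁿ`, `n = m + 1`. -/
def hyperplaneParam (x : Fin m → ℝ) : Fin (m + 1) → ℝ :=
  Fin.snoc x (α ⬝ᵥ x + b)

theorem measurableEmbedding_hyperplaneParam : MeasurableEmbedding (hyperplaneParam α b) := by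
  refine Continuous.measurableEmbedding (continuous_pi fun i => ?_) fun x x' h => ?_
  · induction i using Fin.lastCases with
    | last => simp only [hyperplaneParam, Fin.snoc_last, dotProduct]; fun_prop
    | cast j => simp only [hyperplaneParam, Fin.snoc_castSucc]; fun_prop
  · simpa [hyperplaneParam] using congrArg Fin.init h

/-- The coefficients of the restriction of the form `intForm w` to the hyperplane, as an affine
form in the parameter `x`. This is the vector `R C(w)` of the condition `P(v)`, up to the order of
its entries; its norm is the maximum norm. -/
def restrictCoeff : (Fin (m + 1) → ℤ) × ℤ →+ ℝ × (Fin m → ℝ) where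
  toFun w := (w.2 + b * w.1 (Fin.last m), fun j => w.1 j.castSucc + α j * w.1 (Fin.last m))
  map_zero' := by ext <;> simp
  map_add' w w' := by ext <;> simp <;> ring

theorem intForm_hyperplaneParam (w : (Fin (m + 1) → ℤ) × ℤ) (x : Fin m → ℝ) :
    intForm w (hyperplaneParam α b x) =
      (restrictCoeff α b w).1 + (restrictCoeff α b w).2 ⬝ᵥ x := by
  have hlast : ∑ j, α j * w.1 (Fin.last m) * x j = w.1 (Fin.last m) * ∑ j, α j * x j := by
    rw [Finset.mul_sum]
    exact Finset.sum_congr rfl fun j _ => by ring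
  simp only [intForm, hyperplaneParam, restrictCoeff, AddMonoidHom.coe_mk, ZeroHom.coe_mk,
    Fin.sum_univ_castSucc, Fin.snoc_castSucc, Fin.snoc_last, dotProduct, add_mul,
    Finset.sum_add_distrib, hlast]
  ring

theorem abs_intForm_hyperplaneParam_le (w : (Fin (m + 1) → ℤ) × ℤ) (x : Fin m → ℝ) :
    |intForm w (hyperplaneParam α b x)| ≤ (1 + m * ‖x‖) * ‖restrictCoeff α b w‖ := by
  rw [intForm_hyperplaneParam]
  set c := restrictCoeff α b w
  have hdot : |c.2 ⬝ᵥ x| ≤ m * ‖c.2‖ * ‖x‖ := by simpa using abs_dotProduct_le c.2 x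
  calc |c.1 + c.2 ⬝ᵥ x| ≤ ‖c.1‖ + m * ‖c.2‖ * ‖x‖ :=
        (abs_add_le _ _).trans (add_le_add_right hdot _)
    _ ≤ ‖c‖ + m * ‖c‖ * ‖x‖ := by
      gcongr
      exacts [norm_fst_le c, norm_snd_le c]
    _ = (1 + m * ‖x‖) * ‖c‖ := by ring

/-- The norm of the vector `(p, R C(w))` for `w = (p, p₀)` after the diagonal flow at time `t`:
the entries of `p` are contracted by `e ^ (-tᵢ)` and those of `R C(w)` expanded by
`e ^ (∑ tᵢ)`. -/
noncomputable def flowNorm (t : Fin (m + 1) → ℝ) (w : (Fin (m + 1) → ℤ) × ℤ) : ℝ :=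
  max ‖fun i => Real.exp (-t i) * (w.1 i : ℝ)‖ (Real.exp (∑ i, t i) * ‖restrictCoeff α b w‖)

theorem flowNorm_lt_exp_iff {t : Fin (m + 1) → ℝ} {w : (Fin (m + 1) → ℤ) × ℤ} {r : ℝ} :
    flowNorm α b t w < Real.exp r ↔ (∀ i, |(w.1 i : ℝ)| < Real.exp (t i + r)) ∧
      ‖restrictCoeff α b w‖ < Real.exp (r - ∑ i, t i) := by
  have hcontract i : ‖Real.exp (-t i) * (w.1 i : ℝ)‖ < Real.exp r ↔
      |(w.1 i : ℝ)| < Real.exp (t i + r) := by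
    rw [norm_mul, Real.norm_eq_abs, Real.abs_exp, Real.exp_neg,
      inv_mul_lt_iff₀ (Real.exp_pos _), Real.exp_add, Real.norm_eq_abs]
  rw [flowNorm, max_lt_iff, pi_norm_lt_iff (Real.exp_pos r), Real.exp_sub,
    lt_div_iff₀' (Real.exp_pos _)]
  simp only [hcontract]

/-- The critical exponent `c_s = (v - n) / (s v + n)` of the condition `P(v)`. -/
noncomputable def critRate (n s v : ℝ) : ℝ :=
  (v - n) / (s * v + n)

theorem critRate_lt_iff {n s v d : ℝ} (h : 0 < s * v + n) :
    critRate n s v < d ↔ v * (1 - s * d) < n * (1 + d) := by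
  rw [critRate, div_lt_iff₀ h]
  constructor <;> intro h <;> linarith

theorem critRate_lt_critRate {n s v u : ℝ} (hn : 0 < n) (hs : 0 ≤ s) (hv : 0 < v) (hvu : v < u) :
    critRate n s v < critRate n s u := by
  have hu : 0 < s * u + n := by positivity [hv.trans hvu]
  rw [critRate, critRate, div_lt_div_iff₀ (by positivity) hu]
  nlinarith [mul_pos (sub_pos.2 hvu) hn, mul_nonneg hs (mul_pos (sub_pos.2 hvu) hn).le]

/-- A rate `d` for which the exponent `s (1 + d) / (1 - s d)` lies below `s u / n`. -/
theorem exists_critRate_lt {n s v u : ℝ} (hn : 0 < n) (hs : 0 ≤ s) (hv : n < v) (hvu : v < u) :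
    ∃ d, critRate n s v < d ∧ 0 ≤ d ∧ s * d < 1 ∧ n * (1 + d) < u * (1 - s * d) := by
  have hv0 : 0 < v := hn.trans hv
  have hu0 : 0 < u := hv0.trans hvu
  obtain ⟨d, hvd, hdu⟩ := exists_between (critRate_lt_critRate hn hs hv0 hvu)
  have hd0 : 0 ≤ d := (div_nonneg (by linarith) (by positivity)).trans hvd.le
  have hd : n * (1 + d) < u * (1 - s * d) := by
    rw [critRate, lt_div_iff₀ (by positivity)] at hdu
    linarith
  have hsd : 0 < 1 - s * d := by
    refine pos_of_mul_pos_right (lt_trans ?_ hd) hu0.le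
    positivity
  exact ⟨d, hvd, hd0, by linarith, hd⟩

/-- The condition `P(v)` for a hyperplane with arbitrary slopes `α`, over the integer vectors with
exactly `s` nonzero entries. -/
def FlowCond (s : ℕ) (v : ℝ) : Prop :=
  ∀ d, critRate (m + 1) s v < d → ∃ T > 0, ∀ t : Fin (m + 1) → ℝ, (∀ i, 0 ≤ t i) → T ≤ ∑ i, t i →
    ∀ w : (Fin (m + 1) → ℤ) × ℤ, #{i | w.1 i ≠ 0} = s →
      Real.exp (-d * ∑ i, t i) ≤ flowNorm α b t w

theorem eventually_mul_exp_lt_exp (C : ℝ) {a a' : ℝ} (h : a < a') :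
    ∀ᶠ τ in atTop, C * Real.exp (a * τ) < Real.exp (a' * τ) := by
  have htendsto : Tendsto (fun τ => Real.exp ((a' - a) * τ)) atTop atTop :=
    Real.tendsto_exp_atTop.comp (tendsto_id.const_mul_atTop (sub_pos.2 h))
  filter_upwards [htendsto.eventually_gt_atTop C] with τ hτ
  calc C * Real.exp (a * τ) < Real.exp ((a' - a) * τ) * Real.exp (a * τ) := by gcongr
    _ = Real.exp (a' * τ) := by
      rw [← Real.exp_add]
      ring_nf

variable {α b}

theorem abs_intForm_lt_of_flowNorm_lt {t : Fin (m + 1) → ℝ} {w : (Fin (m + 1) → ℤ) × ℤ} {d : ℝ}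
    (h : flowNorm α b t w < Real.exp (-d * ∑ i, t i)) (x : Fin m → ℝ) :
    |intForm w (hyperplaneParam α b x)| < (1 + m * ‖x‖) * Real.exp (-(1 + d) * ∑ i, t i) := by
  have hc := ((flowNorm_lt_exp_iff α b).1 h).2
  rw [show -d * ∑ i, t i - ∑ i, t i = -(1 + d) * ∑ i, t i by ring] at hc
  exact (abs_intForm_hyperplaneParam_le α b w x).trans_lt (by gcongr)

theorem prodTimes_le_of_flowNorm_lt {t : Fin (m + 1) → ℝ} (ht : ∀ i, 0 ≤ t i)
    {w : (Fin (m + 1) → ℤ) × ℤ} {d : ℝ} (h : flowNorm α b t w < Real.exp (-d * ∑ i, t i)) :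
    prodTimes w.1 ≤ Real.exp ((1 - #{i | w.1 i ≠ 0} * d) * ∑ i, t i) := by
  have hle := prodTimes_le_exp (c := d * ∑ i, t i) ht fun i => by
    simpa [sub_eq_add_neg] using (((flowNorm_lt_exp_iff α b).1 h).1 i).le
  rwa [← mul_assoc, ← one_sub_mul] at hle

theorem goodApprox_infinite_of_not_flowCond {s : ℕ} {v : ℝ} (hs : 0 < s) (hv : 0 < v)
    (h : ¬ FlowCond α b s v) (x : Fin m → ℝ) :
    (goodApprox (hyperplaneParam α b x) (v / (m + 1 : ℕ))).Infinite := by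
  refine goodApprox_infinite fun δ hδ => ?_
  unfold FlowCond at h
  push Not at h
  obtain ⟨d, hd, h⟩ := h
  set γ : ℝ := v / (m + 1 : ℕ)
  have hγ : 0 ≤ γ := by positivity
  have hrate : γ * (1 - s * d) < 1 + d := by
    rw [div_mul_eq_mul_div, div_lt_iff₀ (by positivity), mul_comm (1 + d)]
    exact_mod_cast (critRate_lt_iff (by positivity)).1 hd
  have hd1 : 0 < 1 + d := by
    have : -1 < critRate (m + 1) s v := by
      rw [critRate, lt_div_iff₀ (by positivity)]
      linarith [mul_nonneg s.cast_nonneg hv.le]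
    linarith
  obtain ⟨T, hT⟩ := Filter.eventually_atTop.1
    ((eventually_mul_exp_lt_exp ((1 + m * ‖x‖) / δ) (neg_lt_zero.2 hd1)).and
      (eventually_mul_exp_lt_exp (1 + m * ‖x‖) (neg_lt_neg hrate)))
  obtain ⟨t, ht, hTt, w, rfl, hlt⟩ := h (max 1 T) (lt_max_of_lt_left one_pos)
  obtain ⟨hsmall, hgood⟩ := hT _ ((le_max_right _ _).trans hTt)
  have hval := abs_intForm_lt_of_flowNorm_lt hlt x
  refine ⟨w, fun h0 => hs.ne (by simp [h0]), hval.trans ?_, hval.trans (hgood.trans_le ?_)⟩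
  · rw [div_mul_eq_mul_div, div_lt_iff₀ hδ] at hsmall
    simpa using hsmall
  · rw [neg_mul, mul_assoc, mul_comm γ, ← mul_neg, Real.exp_mul]
    exact Real.rpow_le_rpow_of_nonpos (prodTimes_pos _) (prodTimes_le_of_flowNorm_lt ht hlt)
      (neg_nonpos.2 hγ)

theorem exists_nonneg_sum_eq_and_const_on {ι : Type*} [Fintype ι] (p : ι → Prop) [DecidablePred p]
    (hp : 0 < #{i | p i}) {τ : ℝ} (hτ : 0 ≤ τ) :
    ∃ t : ι → ℝ, (∀ i, 0 ≤ t i) ∧ ∑ i, t i = τ ∧ ∀ i, p i → t i = τ / #{i | p i} := by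
  refine ⟨fun i => if p i then τ / #{i | p i} else 0, fun i => ?_, ?_, fun i hi => if_pos hi⟩
  · dsimp only
    split_ifs <;> positivity
  · rw [← Finset.sum_filter, Finset.sum_const, nsmul_eq_mul]
    field_simp

/-- The flow time is concentrated on the support of `w`, with equal entries `τ / s`, where `τ` is
the total time at which the entries of `w` have just been contracted below `exp (-d τ)`. -/
theorem FlowCond.exists_rpow_le_norm {s : ℕ} {v d : ℝ} (h : FlowCond α b s v)
    (hs : 0 < s) (hvd : critRate (m + 1) s v < d) (hd : 0 ≤ d) (hsd : s * d < 1) :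
    ∃ B > 0, ∀ w : (Fin (m + 1) → ℤ) × ℤ, #{i | w.1 i ≠ 0} = s → ∀ X, 1 ≤ X →
      (∀ i, |(w.1 i : ℝ)| ≤ X) →
        (B * X) ^ (-(s * (1 + d) / (1 - s * d))) ≤ ‖restrictCoeff α b w‖ := by
  obtain ⟨T, hT, h⟩ := h d hvd
  refine ⟨Real.exp T, Real.exp_pos T, fun w hcard X hX hw => ?_⟩
  have hD : 0 < 1 - s * d := by linarith
  have hs1 : (1 : ℝ) ≤ s := mod_cast hs
  set L : ℝ := T + Real.log X with hL
  have hTL : T ≤ L := le_add_of_nonneg_right (Real.log_nonneg hX)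
  have hexpL : Real.exp T * X = Real.exp L := by rw [hL, Real.exp_add, Real.exp_log (by linarith)]
  set τ : ℝ := s * L / (1 - s * d) with hτ
  have hLτ : L ≤ τ := by
    rw [hτ, le_div_iff₀ hD]
    nlinarith [mul_nonneg (mul_nonneg (Nat.cast_nonneg (α := ℝ) s) hd) (hT.le.trans hTL)]
  have hτs : τ / s - d * τ = L := by
    rw [hτ]
    field_simp
  obtain ⟨t, ht, hsum, hsupp⟩ := exists_nonneg_sum_eq_and_const_on (fun i => w.1 i ≠ 0)
    (hcard ▸ hs) (hT.le.trans (hTL.trans hLτ))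
  have hflow := h t ht (hsum ▸ hTL.trans hLτ) w hcard
  rw [← not_lt, flowNorm_lt_exp_iff, not_and, not_lt, hsum] at hflow
  have hcontract i : |(w.1 i : ℝ)| < Real.exp (t i + -d * τ) := by
    by_cases hi : w.1 i = 0
    · simpa [hi] using Real.exp_pos _
    · rw [hsupp i hi, hcard, neg_mul, ← sub_eq_add_neg, hτs, ← hexpL]
      exact (hw i).trans_lt (lt_mul_of_one_lt_left (by linarith) (Real.one_lt_exp_iff.2 hT))
  refine le_of_eq_of_le ?_ (hflow hcontract)
  rw [hexpL, ← Real.exp_mul, hτ]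
  congr 1
  field_simp
  ring

variable (α b) in
theorem abs_fst_castSucc_add_le (w : (Fin (m + 1) → ℤ) × ℤ) (j : Fin m) :
    |(w.1 j.castSucc : ℝ) + α j * w.1 (Fin.last m)| ≤ ‖restrictCoeff α b w‖ :=
  (norm_le_pi_norm (restrictCoeff α b w).2 j).trans (norm_snd_le _)

theorem last_ne_zero_of_norm_restrictCoeff_lt_one {w : (Fin (m + 1) → ℤ) × ℤ} (hw : w ≠ 0)
    (h : ‖restrictCoeff α b w‖ < 1) : w.1 (Fin.last m) ≠ 0 := by
  refine fun h0 => hw ?_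
  have hfst : |(w.2 : ℝ)| < 1 := by
    simpa [restrictCoeff, h0] using (norm_fst_le (restrictCoeff α b w)).trans_lt h
  have hsnd j : |(w.1 (Fin.castSucc j) : ℝ)| < 1 := by
    simpa [h0] using (abs_fst_castSucc_add_le α b w j).trans_lt h
  refine Prod.ext (funext fun i => ?_) (Int.abs_lt_one_iff.1 (mod_cast hfst))
  induction i using Fin.lastCases with
  | last => exact h0
  | cast j => exact Int.abs_lt_one_iff.1 (mod_cast hsnd j)

theorem abs_fst_apply_le {w : (Fin (m + 1) → ℤ) × ℤ} (hw : w ≠ 0)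
    (h : ‖restrictCoeff α b w‖ < 1) (i : Fin (m + 1)) :
    |(w.1 i : ℝ)| ≤ (1 + ‖α‖) * |(w.1 (Fin.last m) : ℝ)| := by
  have hlast : (1 : ℝ) ≤ |(w.1 (Fin.last m) : ℝ)| :=
    mod_cast Int.one_le_abs (last_ne_zero_of_norm_restrictCoeff_lt_one hw h)
  induction i using Fin.lastCases with
  | last => nlinarith [norm_nonneg α]
  | cast j =>
    have htri := abs_sub_abs_le_abs_sub (w.1 j.castSucc : ℝ) (-(α j * w.1 (Fin.last m)))
    rw [abs_neg, abs_mul, sub_neg_eq_add] at htri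
    have hα : |α j| ≤ ‖α‖ := norm_le_pi_norm α j
    nlinarith [abs_fst_castSucc_add_le α b w j]

theorem mul_abs_last_le {w : (Fin (m + 1) → ℤ) × ℤ} {κ : ℝ} (hw : w ≠ 0) (hκ1 : κ ≤ 1)
    (h : ‖restrictCoeff α b w‖ < κ) {j : Fin m} (hj : 2 * κ ≤ |α j|) :
    κ * |(w.1 (Fin.last m) : ℝ)| ≤ |(w.1 j.castSucc : ℝ)| := by
  have hlast : (1 : ℝ) ≤ |(w.1 (Fin.last m) : ℝ)| :=
    mod_cast Int.one_le_abs (last_ne_zero_of_norm_restrictCoeff_lt_one hw (h.trans_le hκ1))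
  have htri := abs_sub_abs_le_abs_sub (α j * w.1 (Fin.last m)) (-(w.1 j.castSucc : ℝ))
  rw [abs_mul, abs_neg, sub_neg_eq_add, add_comm (α j * _)] at htri
  nlinarith [abs_fst_castSucc_add_le α b w j, norm_nonneg (restrictCoeff α b w)]

variable (α b) in
theorem exists_mul_abs_last_le : ∃ κ > 0, κ ≤ 1 ∧ ∀ w : (Fin (m + 1) → ℤ) × ℤ, w ≠ 0 →
    ‖restrictCoeff α b w‖ < κ → (∀ i, w.1 i ≠ 0 → κ * |(w.1 (Fin.last m) : ℝ)| ≤ |(w.1 i : ℝ)|) ∧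
      #{i | w.1 i ≠ 0} = #{j | α j ≠ 0} + 1 := by
  obtain ⟨κ, hκα, hκ0, hκ1⟩ : ∃ κ : ℝ, (∀ j, α j ≠ 0 → 2 * κ ≤ |α j|) ∧ 0 < κ ∧ κ < 1 := by
    have hsmall j : ∀ᶠ κ in nhdsWithin (0 : ℝ) (Ioi 0), α j ≠ 0 → 2 * κ ≤ |α j| := by
      by_cases hj : α j = 0
      · simp [hj]
      · filter_upwards [Ioo_mem_nhdsGT (half_pos (abs_pos.2 hj))] with κ hκ _
        linarith [hκ.2]
    exact ((Filter.eventually_all.2 hsmall).and (Ioo_mem_nhdsGT one_pos)).exists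
  refine ⟨κ, hκ0, hκ1.le, fun w hw h => ?_⟩
  have hlast := last_ne_zero_of_norm_restrictCoeff_lt_one hw (h.trans hκ1)
  have hlow j (hj : α j ≠ 0) := mul_abs_last_le hw hκ1.le h (hκα j hj)
  have hsupp j : w.1 (Fin.castSucc j) ≠ 0 ↔ α j ≠ 0 := by
    refine ⟨fun hwj hj => hwj (Int.abs_lt_one_iff.1 ?_), fun hj hwj => ?_⟩
    · have hlt := (abs_fst_castSucc_add_le α b w j).trans_lt (h.trans hκ1)
      rw [hj, zero_mul, add_zero] at hlt
      exact_mod_cast hlt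
    · refine (mul_pos hκ0 (abs_pos.2 (Int.cast_ne_zero.2 hlast))).not_ge ?_
      simpa [hwj] using hlow j hj
  refine ⟨fun i hi => ?_, ?_⟩
  · induction i using Fin.lastCases with
    | last => exact mul_le_of_le_one_left (abs_nonneg _) hκ1.le
    | cast j => exact hlow j ((hsupp j).1 hi)
  · simp only [Finset.card_filter, Fin.sum_univ_castSucc, if_pos hlast, hsupp]

end

/-! ### Dyadic summation -/

section

theorem max_one_abs_floor_le {x : ℝ} (hx : 1 ≤ |x|) : max 1 |(⌊x⌋ : ℝ)| ≤ 2 * |x| := by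
  refine max_le (by linarith) ?_
  have hfract : |(⌊x⌋ : ℝ) - x| ≤ 1 := by
    rw [abs_le]
    constructor <;> linarith [Int.floor_le x, Int.lt_floor_add_one x]
  linarith [abs_sub_abs_le_abs_sub (⌊x⌋ : ℝ) x]

theorem injective_floor_div_two_pow {W : Type*} {g h : W → ℝ} {j : W → ℕ}
    (hj : ∀ w, 2 ^ j w ≤ h w) (hsep : Pairwise fun w w' => min (h w) (h w') ≤ |g w - g w'|) :
    Function.Injective fun w => (j w, ⌊g w / 2 ^ j w⌋) := by
  intro w w' hww
  obtain ⟨hjj, hfloor⟩ := Prod.mk.inj hww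
  by_contra hne
  rw [← hjj] at hfloor
  have hlt := Int.abs_sub_lt_one_of_floor_eq_floor hfloor
  rw [← sub_div, abs_div, abs_of_pos (by positivity : (0 : ℝ) < 2 ^ j w),
    div_lt_one (by positivity)] at hlt
  exact hlt.not_ge ((le_min (hj w) (hjj ▸ hj w')).trans (hsep hne))

theorem rpow_mul_abs_rpow_neg_le {g h β γ : ℝ} {j : ℕ} (hβ : 0 ≤ β) (hγ : 0 ≤ γ) (h0 : 0 ≤ h)
    (hj : h ≤ 2 ^ (j + 1)) (hg : 2 ^ j ≤ |g|) :
    h ^ β * |g| ^ (-γ) ≤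
      2 ^ (β + γ) * ((2 ^ (β - γ)) ^ j * max 1 |(⌊g / 2 ^ j⌋ : ℝ)| ^ (-γ)) := by
  set P : ℝ := 2 ^ j with hP
  set M : ℝ := max 1 |(⌊g / P⌋ : ℝ)|
  have hP0 : 0 < P := by positivity
  have hM0 : 0 < M := lt_max_of_lt_left one_pos
  have hgM : P * (M / 2) ≤ |g| := by
    have hquot : |g / P| = |g| / P := by rw [abs_div, abs_of_pos hP0]
    have hM : M ≤ 2 * (|g| / P) :=
      hquot ▸ max_one_abs_floor_le (by rwa [hquot, one_le_div hP0])
    calc P * (M / 2) ≤ P * (2 * (|g| / P) / 2) := by gcongr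
      _ = |g| := by field_simp
  have hPrpow : (2 ^ (β - γ) : ℝ) ^ j = P ^ β * P ^ (-γ) := by
    rw [← Real.rpow_add hP0, hP, ← Real.rpow_natCast, ← Real.rpow_natCast,
      ← Real.rpow_mul two_pos.le, ← Real.rpow_mul two_pos.le, mul_comm, sub_eq_add_neg]
  calc h ^ β * |g| ^ (-γ) ≤ (2 * P) ^ β * (P * (M / 2)) ^ (-γ) := by
        have hh : h ≤ 2 * P := by rwa [hP, ← pow_succ']
        have hneg : |g| ^ (-γ) ≤ (P * (M / 2)) ^ (-γ) :=
          Real.rpow_le_rpow_of_nonpos (by positivity) hgM (by linarith)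
        gcongr
    _ = 2 ^ β * P ^ β * (P ^ (-γ) * (M ^ (-γ) * 2 ^ γ)) := by
        rw [Real.mul_rpow two_pos.le hP0.le, Real.mul_rpow hP0.le (by positivity),
          Real.div_rpow hM0.le two_pos.le, Real.rpow_neg two_pos.le, div_inv_eq_mul]
    _ = _ := by
        rw [hPrpow, Real.rpow_add two_pos]
        ring

/-- Dyadically, the index `w` with `2 ^ j ≤ h w < 2 ^ (j + 1)` is determined by `j` and the
interval of length `2 ^ j` containing `g w`. -/
theorem summable_rpow_mul_abs_rpow_neg {W : Type*} {g h : W → ℝ} {β γ : ℝ} (hβ : 0 < β)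
    (hβγ : β < γ) (hγ : 1 < γ) (h1 : ∀ w, 1 ≤ h w) (hg : ∀ w, h w ≤ |g w|)
    (hsep : Pairwise fun w w' => min (h w) (h w') ≤ |g w - g w'|) :
    Summable fun w => h w ^ β * |g w| ^ (-γ) := by
  choose j hj hj' using fun w => exists_nat_pow_near (h1 w) (one_lt_two (α := ℝ))
  have hgeom : Summable fun i : ℕ => ((2 : ℝ) ^ (β - γ)) ^ i :=
    summable_geometric_of_lt_one (by positivity)
      (Real.rpow_lt_one_of_one_lt_of_neg one_lt_two (by linarith))
  have hprod : Summable fun z : ℕ × ℤ =>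
      (2 : ℝ) ^ (β + γ) * (((2 : ℝ) ^ (β - γ)) ^ z.1 * max 1 |(z.2 : ℝ)| ^ (-γ)) :=
    (hgeom.mul_of_nonneg (summable_max_one_abs_int_rpow hγ) (fun _ => by positivity)
      fun _ => by positivity).mul_left _
  refine Summable.of_nonneg_of_le (fun w => by positivity [h1 w]) (fun w => ?_)
    (hprod.comp_injective (injective_floor_div_two_pow hj hsep))
  exact rpow_mul_abs_rpow_neg_le hβ.le (by linarith) (zero_le_one.trans (h1 w)) (hj' w).le
    ((hj w).trans (hg w))

theorem rpow_neg_inv_div_le {B x ρ β : ℝ} (hB : 0 < B) (hx : 0 < x) (hβ : 0 < β)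
    (h : (B * x) ^ (-β) ≤ ρ) : ρ ^ (-β⁻¹) / B ≤ x := by
  have hBx : 0 < B * x := mul_pos hB hx
  rw [div_le_iff₀' hB]
  calc ρ ^ (-β⁻¹) ≤ ((B * x) ^ (-β)) ^ (-β⁻¹) :=
        Real.rpow_le_rpow_of_nonpos (by positivity) h (by simpa using hβ.le)
    _ = B * x := by
        rw [← Real.rpow_mul hBx.le, neg_mul_neg, mul_inv_cancel₀ hβ.ne', Real.rpow_one]

theorem inv_eq_mul_rpow_neg_inv_div_rpow {B ρ β : ℝ} (hB : 0 < B) (hρ : 0 < ρ) (hβ : β ≠ 0) :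
    ρ⁻¹ = B ^ β * (ρ ^ (-β⁻¹) / B) ^ β := by
  rw [← Real.mul_rpow hB.le (by positivity), mul_div_cancel₀ _ hB.ne', ← Real.rpow_mul hρ.le,
    neg_mul, inv_mul_cancel₀ hβ, Real.rpow_neg_one]

variable {G E : Type*} [AddCommGroup G] [SeminormedAddCommGroup E] {c : G →+ E} {g : G →+ ℤ}
  {κ B β γ : ℝ}

/-- Applying the hypothesis to `w - w'` separates `g w` from `g w'`. -/
theorem max_one_rpow_norm_le_abs_sub (hB : 0 < B) (hβ : 0 < β)
    (h : ∀ w, w ≠ 0 → ‖c w‖ < κ → g w ≠ 0 ∧ (B * |(g w : ℝ)|) ^ (-β) ≤ ‖c w‖) {w w' : G}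
    (hne : w ≠ w') (hw : ‖c w‖ < κ / 2) (hle : ‖c w'‖ ≤ ‖c w‖) :
    max 1 ((2 * ‖c w‖) ^ (-β⁻¹) / B) ≤ |(g w : ℝ) - g w'| := by
  have hsub : ‖c (w - w')‖ ≤ 2 * ‖c w‖ := by
    rw [map_sub]
    linarith [norm_sub_le (c w) (c w')]
  obtain ⟨hg0, hlow⟩ := h (w - w') (sub_ne_zero.2 hne) (by linarith)
  have hg1 : (1 : ℝ) ≤ |(g (w - w') : ℝ)| := mod_cast Int.one_le_abs hg0
  have hmax := max_le hg1 (rpow_neg_inv_div_le hB (one_pos.trans_le hg1) hβ (hlow.trans hsub))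
  rwa [map_sub, Int.cast_sub] at hmax

theorem summable_abs_rpow_neg_div_norm (hB : 0 < B) (hβ : 0 < β) (hβγ : β < γ) (hγ : 1 < γ)
    (h : ∀ w, w ≠ 0 → ‖c w‖ < κ → g w ≠ 0 ∧ (B * |(g w : ℝ)|) ^ (-β) ≤ ‖c w‖) :
    Summable fun w : {w : G // w ≠ 0 ∧ ‖c w‖ < κ / 2} => |(g w : ℝ)| ^ (-γ) / ‖c w‖ := by
  let H (w : {w : G // w ≠ 0 ∧ ‖c w‖ < κ / 2}) : ℝ := max 1 ((2 * ‖c w‖) ^ (-β⁻¹) / B)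
  have hw (w : {w : G // w ≠ 0 ∧ ‖c w‖ < κ / 2}) :
      g w ≠ 0 ∧ (B * |(g w : ℝ)|) ^ (-β) ≤ ‖c w‖ :=
    h w w.2.1 (by linarith [w.2.2, norm_nonneg (c w)])
  have hgH w : H w ≤ |(g w : ℝ)| := by
    have hg1 : (1 : ℝ) ≤ |(g w : ℝ)| := mod_cast Int.one_le_abs (hw w).1
    exact max_le hg1 (rpow_neg_inv_div_le hB (one_pos.trans_le hg1) hβ
      ((hw w).2.trans (by linarith [norm_nonneg (c w)])))
  have hsep : Pairwise fun w w' => min (H w) (H w') ≤ |(g w : ℝ) - g w'| := by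
    intro w w' hne
    rcases le_total ‖c w'‖ ‖c w‖ with hle | hle
    · exact (min_le_left _ _).trans
        (max_one_rpow_norm_le_abs_sub hB hβ h (Subtype.coe_ne_coe.2 hne) w.2.2 hle)
    · rw [abs_sub_comm]
      exact (min_le_right _ _).trans
        (max_one_rpow_norm_le_abs_sub hB hβ h (Subtype.coe_ne_coe.2 hne.symm) w'.2.2 hle)
  refine Summable.of_nonneg_of_le (fun w => by positivity) (fun w => ?_)
    ((summable_rpow_mul_abs_rpow_neg hβ hβγ hγ (fun _ => le_max_left _ _) hgH hsep).mul_left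
      (2 * B ^ β))
  have hc0 : 0 < ‖c w‖ :=
    (Real.rpow_pos_of_pos (mul_pos hB (abs_pos.2 (mod_cast (hw w).1))) _).trans_le (hw w).2
  have hinv : (2 * ‖c w‖)⁻¹ ≤ B ^ β * H w ^ β := by
    rw [inv_eq_mul_rpow_neg_inv_div_rpow hB (by positivity) hβ.ne']
    gcongr
    exact le_max_right _ _
  calc |(g w : ℝ)| ^ (-γ) / ‖c w‖ = 2 * (2 * ‖c w‖)⁻¹ * |(g w : ℝ)| ^ (-γ) := by
        rw [mul_inv]
        ring
    _ ≤ 2 * (B ^ β * H w ^ β) * |(g w : ℝ)| ^ (-γ) := by gcongr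
    _ = 2 * B ^ β * (H w ^ β * |(g w : ℝ)| ^ (-γ)) := by ring

end

/-! ### Finiteness at almost every point -/

section

open scoped Finset

variable {m : ℕ} {α : Fin m → ℝ} {b : ℝ}

variable (α b) in
theorem ae_finite_mem_slab_of_le_norm {R κ γ : ℝ} (hR : 1 ≤ R) (hκ : 0 < κ) (hγ : 1 < γ) :
    ∀ᵐ x, {w : (Fin (m + 1) → ℤ) × ℤ | κ ≤ ‖restrictCoeff α b w‖ ∧
      x ∈ slab (restrictCoeff α b w) R (prodTimes w.1 ^ (-γ))}.Finite := by
  obtain ⟨C, -, hvol⟩ := exists_tsum_volume_slab_le m hR hκ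
  refine ae_finite_setOfPred_mem (s := fun w => {x | κ ≤ ‖restrictCoeff α b w‖ ∧
    x ∈ slab (restrictCoeff α b w) R (prodTimes w.1 ^ (-γ))}) ?_
  rw [ENNReal.tsum_prod']
  refine ne_top_of_le_ne_top ((summable_prodTimes_rpow _ hγ).mul_left C).tsum_ofReal_ne_top
    (ENNReal.tsum_le_tsum fun q => hvol (b * q (Fin.last m))
      (fun j => q j.castSucc + α j * q (Fin.last m)) _ (Real.rpow_nonneg (prodTimes_pos q).le _)
      (Real.rpow_le_one_of_one_le_of_nonpos (one_le_prodTimes q) (by linarith)))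

theorem ae_finite_mem_slab_of_norm_lt {R κ B β γ δ : ℝ} {s : ℕ} (hR : 1 ≤ R) (hB : 0 < B)
    (hβ : 0 < β) (hβγ : β < s * γ) (hγ : 1 < s * γ) (hγ0 : 0 ≤ γ) (hδ : 0 < δ)
    (h : ∀ w, w ≠ 0 → ‖restrictCoeff α b w‖ < κ → w.1 (Fin.last m) ≠ 0 ∧
      (B * |(w.1 (Fin.last m) : ℝ)|) ^ (-β) ≤ ‖restrictCoeff α b w‖ ∧
      (δ * |(w.1 (Fin.last m) : ℝ)|) ^ s ≤ prodTimes w.1) :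
    ∀ᵐ x, {w | (w ≠ 0 ∧ ‖restrictCoeff α b w‖ < κ / 2) ∧
      x ∈ slab (restrictCoeff α b w) R (prodTimes w.1 ^ (-γ))}.Finite := by
  let J := {w // w ≠ 0 ∧ ‖restrictCoeff α b w‖ < κ / 2}
  have hκ (w : J) : ‖restrictCoeff α b w‖ < κ := by
    linarith [w.2.2, norm_nonneg (restrictCoeff α b w)]
  have hlast (w : J) : 0 < |(w.1.1 (Fin.last m) : ℝ)| :=
    abs_pos.2 (mod_cast (h w w.2.1 (hκ w)).1)
  have hnorm (w : J) : 0 < ‖restrictCoeff α b w‖ :=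
    (Real.rpow_pos_of_pos (mul_pos hB (hlast w)) _).trans_le (h w w.2.1 (hκ w)).2.1
  have hdecay (w : J) : prodTimes w.1.1 ^ (-γ) ≤
      δ ^ (-(s * γ)) * |(w.1.1 (Fin.last m) : ℝ)| ^ (-(s * γ)) := by
    calc prodTimes w.1.1 ^ (-γ) ≤ ((δ * |(w.1.1 (Fin.last m) : ℝ)|) ^ s) ^ (-γ) :=
          Real.rpow_le_rpow_of_nonpos (pow_pos (mul_pos hδ (hlast w)) s)
            (h w w.2.1 (hκ w)).2.2 (neg_nonpos.2 hγ0)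
      _ = _ := by
          rw [← Real.rpow_natCast, ← Real.rpow_mul (by positivity), mul_neg,
            Real.mul_rpow hδ.le (abs_nonneg _)]
  let last : (Fin (m + 1) → ℤ) × ℤ →+ ℤ :=
    (Pi.evalAddMonoidHom (fun _ => ℤ) (Fin.last m)).comp (AddMonoidHom.fst _ _)
  have hsum : Summable fun w : J => prodTimes w.1.1 ^ (-γ) / ‖restrictCoeff α b w‖ := by
    have hlow w hw hlt := (h w hw hlt).imp_right And.left
    refine Summable.of_nonneg_of_le
      (fun w => div_nonneg (Real.rpow_nonneg (prodTimes_pos _).le _) (norm_nonneg _))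
      (fun w => ?_) ((summable_abs_rpow_neg_div_norm (g := last) hB hβ hβγ hγ hlow).mul_left
        (δ ^ (-(s * γ))))
    rw [← mul_div_assoc]
    exact div_le_div_of_nonneg_right (hdecay w) (norm_nonneg _)
  filter_upwards [ae_finite_mem_slab hR (fun w : J => norm_pos_iff.1 (hnorm w))
    (fun w => Real.rpow_nonneg (prodTimes_pos w.1.1).le _) hsum] with x hx
  refine (hx.image Subtype.val).subset ?_
  rintro w ⟨hw, hmem⟩
  exact ⟨⟨w, hw⟩, hmem, rfl⟩

theorem ae_finite_goodApprox_of_norm_lt {κ B β γ δ : ℝ} {s : ℕ} (hκ : 0 < κ) (hB : 0 < B)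
    (hβ : 0 < β) (hβγ : β < s * γ) (hs : 0 < s) (hγ : 1 < γ) (hδ : 0 < δ)
    (h : ∀ w, w ≠ 0 → ‖restrictCoeff α b w‖ < κ → w.1 (Fin.last m) ≠ 0 ∧
      (B * |(w.1 (Fin.last m) : ℝ)|) ^ (-β) ≤ ‖restrictCoeff α b w‖ ∧
      (δ * |(w.1 (Fin.last m) : ℝ)|) ^ s ≤ prodTimes w.1) :
    ∀ᵐ x, (goodApprox (hyperplaneParam α b x) γ).Finite := by
  have hsγ : 1 < s * γ := one_lt_mul_of_le_of_lt (mod_cast hs) hγ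
  have hbox (N : ℕ) : ∀ᵐ x, ‖x‖ ≤ N + 1 → (goodApprox (hyperplaneParam α b x) γ).Finite := by
    have hN : (1 : ℝ) ≤ N + 1 := le_add_of_nonneg_left N.cast_nonneg
    filter_upwards [ae_finite_mem_slab_of_le_norm α b hN (half_pos hκ) hγ,
      ae_finite_mem_slab_of_norm_lt hN hB hβ hβγ hsγ (zero_le_one.trans hγ.le) hδ h]
      with x hlarge hsmall hx
    refine (((hlarge.union hsmall).image Prod.fst).union (Set.finite_singleton 0)).subset ?_
    rintro q ⟨p, hp⟩
    have hmem : x ∈ slab (restrictCoeff α b (q, p)) (N + 1) (prodTimes q ^ (-γ)) :=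
      ⟨hx, by rwa [intForm_hyperplaneParam] at hp⟩
    by_cases hq : q = 0
    · exact Or.inr hq
    · refine Or.inl ⟨(q, p), ?_, rfl⟩
      rcases le_or_gt (κ / 2) ‖restrictCoeff α b (q, p)‖ with hge | hlt
      · exact Or.inl ⟨hge, hmem⟩
      · exact Or.inr ⟨⟨fun h0 => hq (congrArg Prod.fst h0), hlt⟩, hmem⟩
  filter_upwards [ae_all_iff.2 hbox] with x hx
  obtain ⟨N, hN⟩ := exists_nat_ge ‖x‖
  exact hx N (by linarith)

theorem FlowCond.exists_small_coeff_bounds {s : ℕ} {v d : ℝ} (h : FlowCond α b s v)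
    (hs : #{j | α j ≠ 0} + 1 = s) (hvd : critRate (m + 1) s v < d) (hd : 0 ≤ d)
    (hsd : s * d < 1) :
    ∃ κ > 0, ∃ B > 0, ∀ w, w ≠ 0 → ‖restrictCoeff α b w‖ < κ →
      w.1 (Fin.last m) ≠ 0 ∧
      (B * |(w.1 (Fin.last m) : ℝ)|) ^ (-(s * (1 + d) / (1 - s * d))) ≤ ‖restrictCoeff α b w‖ ∧
      (κ * |(w.1 (Fin.last m) : ℝ)|) ^ s ≤ prodTimes w.1 := by
  obtain ⟨κ, hκ, hκ1, hsmall⟩ := exists_mul_abs_last_le α b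
  obtain ⟨B, hB, hlow⟩ := h.exists_rpow_le_norm (hs ▸ Nat.succ_pos _) hvd hd hsd
  refine ⟨κ, hκ, B * (1 + ‖α‖), by positivity, fun w hw hlt => ?_⟩
  have hlt1 := hlt.trans_le hκ1
  have hlast := last_ne_zero_of_norm_restrictCoeff_lt_one hw hlt1
  obtain ⟨hbelow, hcard⟩ := hsmall w hw hlt
  rw [hs] at hcard
  refine ⟨hlast, ?_, hcard ▸ pow_card_le_prodTimes (by positivity) hbelow⟩
  rw [mul_assoc]
  refine hlow w hcard _ ?_ (abs_fst_apply_le hw hlt1)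
  exact one_le_mul_of_one_le_of_one_le (le_add_of_nonneg_right (norm_nonneg α))
    (mod_cast Int.one_le_abs hlast)

theorem FlowCond.ae_finite_goodApprox {s : ℕ} {v u : ℝ} (h : FlowCond α b s v)
    (hs : #{j | α j ≠ 0} + 1 = s) (hv : (m + 1 : ℝ) < v) (hvu : v < u) :
    ∀ᵐ x, (goodApprox (hyperplaneParam α b x) (u / (m + 1 : ℕ))).Finite := by
  set γ : ℝ := u / (m + 1 : ℕ) with hγdef
  have hm : (0 : ℝ) < m + 1 := by positivity
  have hγ : 1 < γ := by
    rw [hγdef, one_lt_div (by positivity)]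
    push_cast
    linarith
  have hs0 : 0 < s := hs ▸ Nat.succ_pos _
  obtain ⟨d, hvd, hd, hsd, hdu⟩ := exists_critRate_lt hm s.cast_nonneg hv hvu
  obtain ⟨κ, hκ, B, hB, hsmall⟩ := h.exists_small_coeff_bounds hs hvd hd hsd
  have hD : 0 < 1 - s * d := by linarith
  have hβ : 0 < s * (1 + d) / (1 - s * d) := by positivity
  have hdγ : (1 + d) / (1 - s * d) < γ := by
    rw [hγdef, div_lt_div_iff₀ hD (by positivity)]
    push_cast
    linarith
  refine ae_finite_goodApprox_of_norm_lt hκ hB hβ ?_ hs0 hγ hκ hsmall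
  rw [mul_div_assoc]
  gcongr

end

/-! ### The data of the theorem -/

section

open scoped Finset

/-- The slopes of the hyperplane of the theorem: `a` on the first `r` coordinates, zero on the
others. -/
noncomputable def extendSlope {m r : ℕ} (hrm : r ≤ m) (a : Fin r → ℝ) : Fin m → ℝ :=
  Function.extend (Fin.castLE hrm) a (0 : Fin m → ℝ)

variable {m r : ℕ} (hrm : r ≤ m) (a : Fin r → ℝ)

theorem extendSlope_castLE (i : Fin r) : extendSlope hrm a (Fin.castLE hrm i) = a i :=
  (Fin.castLE_injective hrm).extend_apply a (0 : Fin m → ℝ) i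

theorem extendSlope_of_le {j : Fin m} (hj : r ≤ j) : extendSlope hrm a j = 0 := by
  refine Function.extend_apply' a (0 : Fin m → ℝ) j ?_
  rintro ⟨i, rfl⟩
  exact hj.not_gt i.2

theorem card_extendSlope_ne_zero {a : Fin r → ℝ} (ha : ∀ i, a i ≠ 0) :
    #{j | extendSlope hrm a j ≠ 0} = r := by
  have hmap : ({j | extendSlope hrm a j ≠ 0} : Finset (Fin m)) =
      Finset.univ.map (Fin.castLEEmb hrm) := by
    ext j
    simp only [Finset.mem_filter, Finset.mem_univ, true_and, Finset.mem_map, Fin.castLEEmb_apply]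
    refine ⟨fun h => ?_, ?_⟩
    · have hj : (j : ℕ) < r := not_le.1 (h ∘ extendSlope_of_le hrm a)
      exact ⟨⟨j, hj⟩, rfl⟩
    · rintro ⟨i, rfl⟩
      simpa only [extendSlope_castLE] using ha i
  rw [hmap, Finset.card_map, Finset.card_univ, Fintype.card_fin]

theorem extendSlope_dotProduct (x : Fin m → ℝ) :
    extendSlope hrm a ⬝ᵥ x = ∑ i, a i * x (Fin.castLE hrm i) := by
  refine (Finset.sum_of_injOn (Fin.castLE hrm) (Fin.castLE_injective hrm).injOn (by simp) ?_
    fun i _ => by rw [extendSlope_castLE]).symm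
  intro j _ hj
  have hj' : r ≤ (j : ℕ) := by
    by_contra! hlt
    exact hj ⟨⟨j, hlt⟩, by simp, rfl⟩
  rw [extendSlope_of_le hrm a hj', zero_mul]

theorem RCnorm_eq_norm_restrictCoeff (b : ℝ) (w : (Fin (m + 1) → ℤ) × ℤ) :
    RCnorm m r hrm a b w.2 w.1 = ‖restrictCoeff (extendSlope hrm a) b w‖ := by
  set c := restrictCoeff (extendSlope hrm a) b w with hc
  have hhead (i : Fin r) : |(w.1 (Fin.castLE (le_trans hrm (Nat.le_succ m)) i) : ℝ) +
      a i * w.1 (Fin.last m)| = ‖c.2 (Fin.castLE hrm i)‖ := by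
    rw [← extendSlope_castLE hrm a i]
    rfl
  have htail (j : Fin m) (hj : r ≤ j) : |(w.1 j.castSucc : ℝ)| = ‖c.2 j‖ := by
    simp [hc, restrictCoeff, extendSlope_of_le hrm a hj]
  refine congrArg (max ‖c.1‖) (eq_of_forall_ge_iff fun y => ?_)
  rw [max_le_iff, Finset.fold_max_le, Finset.fold_max_le]
  refine ⟨fun ⟨⟨hy, hl⟩, _, hr⟩ => (pi_norm_le_iff_of_nonneg hy).2 fun j => ?_, fun h => ?_⟩
  · rcases lt_or_ge (j : ℕ) r with hj | hj
    · exact (hhead ⟨j, hj⟩).symm.trans_le (hl _ (Finset.mem_univ _))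
    · exact (htail j hj).symm.trans_le (hr _ (by simpa using hj))
  · have hy := (norm_nonneg c.2).trans h
    have hle := (pi_norm_le_iff_of_nonneg hy).1 h
    refine ⟨⟨hy, fun i _ => (hhead i).trans_le (hle _)⟩, hy, fun j hj => ?_⟩
    obtain ⟨hrj, hjm⟩ := (Finset.mem_filter.1 hj).2
    exact (htail ⟨j, hjm⟩ hrj).trans_le (hle _)

theorem fold_max_abs_eq_norm {ι : Type*} [Fintype ι] (f : ι → ℝ) :
    Finset.univ.fold max 0 (fun i => |f i|) = ‖f‖ := by
  refine eq_of_forall_ge_iff fun y => ?_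
  rw [Finset.fold_max_le]
  refine ⟨fun ⟨hy, h⟩ => (pi_norm_le_iff_of_nonneg hy).2 fun i => h i (Finset.mem_univ i),
    fun h => ⟨(norm_nonneg f).trans h, fun i _ => (norm_le_pi_norm f i).trans h⟩⟩

theorem pCond_iff_flowCond (b v : ℝ) :
    PCond m r hrm a b v ↔ FlowCond (extendSlope hrm a) b (r + 1) v := by
  have hflow (t : Fin (m + 1) → ℝ) (w : (Fin (m + 1) → ℤ) × ℤ) :
      max (Finset.univ.fold max 0 fun i => Real.exp (-t i) * |(w.1 i : ℝ)|)
        (Real.exp (∑ i, t i) * RCnorm m r hrm a b w.2 w.1) =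
        flowNorm (extendSlope hrm a) b t w := by
    rw [flowNorm, RCnorm_eq_norm_restrictCoeff, ← fold_max_abs_eq_norm]
    simp only [abs_mul, Real.abs_exp]
  simp only [PCond, FlowCond, critRate, ← hflow, Nat.cast_add, Nat.cast_one]
  exact forall₂_congr fun d _ => exists_congr fun T => and_congr_right fun _ =>
    forall₃_congr fun t _ _ => ⟨fun h w => h w.2 w.1, fun h p₀ p => h (p, p₀)⟩

theorem snoc_eq_hyperplaneParam (b : ℝ) :
    (fun x : Fin m → ℝ => Fin.snoc x (∑ i, a i * x (Fin.castLE hrm i) + b)) =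
      hyperplaneParam (extendSlope hrm a) b := by
  funext x
  rw [hyperplaneParam, extendSlope_dotProduct]

end

open scoped Finset in
theorem stmt17_general {m : ℕ} (α : Fin m → ℝ) (b : ℝ) {μ : Measure (Fin m → ℝ)} [NeZero μ]
    (hμ : μ ≪ volume) :
    omegaTMeas (μ.map (hyperplaneParam α b)) = max ((m + 1 : ℕ) : EReal)
      (sSup {w : EReal | ∃ v : ℝ, w = v ∧ (m + 1 : ℝ) < v ∧
        ¬ FlowCond α b (#{j | α j ≠ 0} + 1) v}) := by
  have hemb := measurableEmbedding_hyperplaneParam α b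
  have : NeZero (μ.map (hyperplaneParam α b)) :=
    ⟨(Measure.map_ne_zero_iff hemb.measurable.aemeasurable).2 (NeZero.ne μ)⟩
  apply le_antisymm
  · refine omegaTMeas_le fun u hu => hemb.ae_map_iff.2 ?_
    obtain ⟨v, hv, hvu⟩ := EReal.lt_iff_exists_real_btwn.1 hu
    obtain ⟨hmv, hsup⟩ := max_lt_iff.1 hv
    have hmv' : (m + 1 : ℝ) < v := by exact_mod_cast hmv
    have hP : FlowCond α b (#{j | α j ≠ 0} + 1) v := by
      by_contra hP
      exact hsup.not_ge (le_sSup ⟨v, rfl, hmv', hP⟩)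
    have hfin := hP.ae_finite_goodApprox rfl hmv' (EReal.coe_lt_coe_iff.1 hvu)
    filter_upwards [hμ.ae_le hfin] with x hx
    exact omegaT_le_of_finite hx
  · refine le_omegaTMeas (hemb.ae_map_iff.2 (ae_of_all _ fun x => max_le (natCast_le_omegaT _) ?_))
    refine sSup_le ?_
    rintro _ ⟨v, rfl, hv, hP⟩
    exact le_omegaT_of_infinite (goodApprox_infinite_of_not_flowCond (Nat.succ_pos _)
      ((by positivity : (0 : ℝ) < m + 1).trans hv) hP x)

theorem stmt17 (m r : ℕ) (hm : 1 ≤ m) (hrm : r ≤ m) (a : Fin r → ℝ)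
    (ha : ∀ i, a i ≠ 0) (b : ℝ) :
    omegaTMeas (Measure.map
        (fun x : Fin m → ℝ => Fin.snoc x (∑ i, a i * x (Fin.castLE hrm i) + b)) volume)
      = max (((m + 1 : ℕ) : EReal))
          (sSup {w : EReal | ∃ v : ℝ, w = (v : EReal) ∧ (m + 1 : ℝ) < v ∧
            ¬ PCond m r hrm a b v}) := by
  simp only [snoc_eq_hyperplaneParam hrm, pCond_iff_flowCond,
    stmt17_general _ b Measure.AbsolutelyContinuous.rfl, card_extendSlope_ne_zero hrm ha]
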